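/- arXiv:1609.04271 — 2 statements merged into one kernel-verified Lean document; each statement's English description precedes it below -/
import Mathlib

section
/- Let x, y ∈ Ω with first E-segments X₁ and Y₁ respectively. If x₁ = y₁ and X₁ ≠ Y₁, then π_E(x) ≠ π_E(y) and Λ_E(x,y) equals p or p + 1, where p is the length of the longest common prefix of x and y. Similarly, if u, v ∈ Ω have first F-segments U₁ ≠ V₁ with u₁ = v₁, then π_F(u) ≠ π_F(v) and Λ_F(u,v) equals q or q + 1, where q is the length of the longest common prefix of u and v. -/
/-!
Write `p` for the length of the common prefix.  At level `p` the two cylinders coincide, so the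
separation number is at least `p`; everything else follows once the cylinders of level `p + 2`
are shown to be disjoint.

Geometry.  Both digit sets consist of Gaussian integers with coordinates in `{0, 1, 2}`, so both
attractors lie in the unit square (`attractor_bounds`).  After removal of the common prefix, two
cylinders of the same level differ by a Gaussian integer `δ`, and they can meet only if both
coordinates of `δ` are at most `1` in absolute value.  Passing to the next level turns `δ` into
`3δ + d_b - d_a`.  Following this for three levels after the first mismatch (`meet_offsets`) leaves
very few possibilities: for both systems, if the cylinders of level `p + 2` meet then neither of
the mismatching letters is `5`, and a mismatching letter `2` is not followed by `2` or `5`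
(`Touching`, `touching_E`, `touching_F`).

Combinatorics.  If the first letters agree and the first segments differ, at least one first
segment is special.  Reading along it up to the mismatch shows that the mismatch involves the
letter `5`, or a letter `2` inside a block `42^m5` and hence followed by `2` or `5`
(`not_touching_E`, `not_touching_F`).
-/

open MeasureTheory

noncomputable section

/-- The alphabet `{1,…,5}`, encoded as `Fin 5` (letter `k` is index `k-1`). -/
abbrev Letter := Fin 5

/-- The letter `1`. -/
def l1 : Letter := 0
/-- The letter `2`. -/
def l2 : Letter := 1
/-- The letter `3`. -/
def l3 : Letter := 2
/-- The letter `4`. -/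
def l4 : Letter := 3
/-- The letter `5`. -/
def l5 : Letter := 4

/-- The digit set of `E`: `(d_1,…,d_5) = (0, 1, 2, 2+i, 1+2i)`. -/
def dE : Letter → ℂ := ![0, 1, 2, 2 + Complex.I, 1 + 2 * Complex.I]

/-- The digit set of `F`: `(e_1,…,e_5) = (1+2i, 1+i, 1, 0, 2+i)`. -/
def dF : Letter → ℂ := ![1 + 2 * Complex.I, 1 + Complex.I, 1, 0, 2 + Complex.I]

/-- The map `φ^E_j(z) = (z + d_j)/3`. -/
def phiE (j : Letter) (z : ℂ) : ℂ := (z + dE j) / 3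

/-- The map `φ^F_j(z) = (z + e_j)/3`. -/
def phiF (j : Letter) (z : ℂ) : ℂ := (z + dF j) / 3

/-- For a finite word `w = w_1⋯w_n`, the composition `φ_{w_1} ∘ ⋯ ∘ φ_{w_n}`
(the empty word gives the identity). -/
def iterPhi (φ : Letter → ℂ → ℂ) : List Letter → ℂ → ℂ
  | [] => id
  | j :: w => φ j ∘ iterPhi φ w

/-- `K` is the attractor of the IFS `{φ_j}`: the (unique) nonempty compact set with
`K = ⋃_j φ_j(K)`. -/
def IsAttractor (φ : Letter → ℂ → ℂ) (K : Set ℂ) : Prop :=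
  K.Nonempty ∧ IsCompact K ∧ K = ⋃ j, φ j '' K

/-- The prefix `x_1⋯x_n` of the sequence `x`. -/
def preWord (x : ℕ → Letter) (n : ℕ) : List Letter := List.ofFn fun i : Fin n => x i

/-- The factor `x_{j+1}⋯x_{j+L}` of `x` (`j` entries skipped, length `L`). -/
def fword (x : ℕ → Letter) (j L : ℕ) : List Letter := List.ofFn fun i : Fin L => x (j + i)

/-- `p = π_K(x)`, i.e. `p` is the point of `⋂_{n≥1} φ_{x_1⋯x_n}(K)`. -/
def codes (φ : Letter → ℂ → ℂ) (K : Set ℂ) (x : ℕ → Letter) (p : ℂ) : Prop :=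
  ∀ n, p ∈ iterPhi φ (preWord x n) '' K

/-- `Ω`: the sequences that are eventually constant equal to the letter `4`. -/
def OmegaSeq : Set (ℕ → Letter) := {x | ∃ N, ∀ n, N ≤ n → x n = l4}

/-- `Λ(x,y) = n`: the separation number of `(x,y)` for the IFS `φ` with attractor `K`
is `n`, i.e. `n` is the largest integer with `φ_{x_1⋯x_n}(K) ∩ φ_{y_1⋯y_n}(K) ≠ ∅`. -/
def SepNum (φ : Letter → ℂ → ℂ) (K : Set ℂ) (x y : ℕ → Letter) (n : ℕ) : Prop :=
  (iterPhi φ (preWord x n) '' K ∩ iterPhi φ (preWord y n) '' K).Nonempty ∧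
    ∀ m, n < m → iterPhi φ (preWord x m) '' K ∩ iterPhi φ (preWord y m) '' K = ∅

/-- The factor of `x` starting at position `j` (0-indexed) of length `L` is an
`E`-special segment: either `35^k` followed by a letter `≠ 5` (so `L = k+1`, `k ≥ 1`),
or `42^{k-1}5` (so `L = k+1`, `k ≥ 1`). -/
def ESpecial (x : ℕ → Letter) (j L : ℕ) : Prop :=
  (2 ≤ L ∧ x j = l3 ∧ (∀ i, 1 ≤ i → i < L → x (j + i) = l5) ∧ x (j + L) ≠ l5) ∨
  (2 ≤ L ∧ x j = l4 ∧ (∀ i, 1 ≤ i → i < L - 1 → x (j + i) = l2) ∧ x (j + L - 1) = l5)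

/-- The entry of `x` at position `j` is an `E`-plain segment: it belongs to no
`E`-special segment of `x`. -/
def EPlain (x : ℕ → Letter) (j : ℕ) : Prop :=
  ∀ p L, ESpecial x p L → ¬(p ≤ j ∧ j < p + L)

/-- An `E`-segment: an `E`-special segment, or a single `E`-plain entry. -/
def ESegment (x : ℕ → Letter) (j L : ℕ) : Prop :=
  ESpecial x j L ∨ (L = 1 ∧ EPlain x j)

/-- The factor of `u` starting at position `j` of length `L` is an `F`-special segment:
`42^m5` followed by a letter `≠ 5` (`L = m+2`, `m ≥ 0`), or `42^m55` (`L = m+3`, `m ≥ 0`),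
or `35` (`L = 2`). -/
def FSpecial (u : ℕ → Letter) (j L : ℕ) : Prop :=
  (2 ≤ L ∧ u j = l4 ∧ (∀ i, 1 ≤ i → i < L - 1 → u (j + i) = l2) ∧
    u (j + L - 1) = l5 ∧ u (j + L) ≠ l5) ∨
  (3 ≤ L ∧ u j = l4 ∧ (∀ i, 1 ≤ i → i < L - 2 → u (j + i) = l2) ∧
    u (j + L - 2) = l5 ∧ u (j + L - 1) = l5) ∨
  (L = 2 ∧ u j = l3 ∧ u (j + 1) = l5)

/-- The entry of `u` at position `j` is an `F`-plain segment. -/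
def FPlain (u : ℕ → Letter) (j : ℕ) : Prop :=
  ∀ p L, FSpecial u p L → ¬(p ≤ j ∧ j < p + L)

/-- An `F`-segment: an `F`-special segment, or a single `F`-plain entry. -/
def FSegment (u : ℕ → Letter) (j L : ℕ) : Prop :=
  FSpecial u j L ∨ (L = 1 ∧ FPlain u j)

/-- `b` enumerates the starting positions of a factorization of `x` into consecutive
segments: `b 0 = 0` and for each `j`, the factor occupying positions `[b j, b (j+1))`
is a segment (in the sense of `Seg`). -/
def SegDecomp (Seg : (ℕ → Letter) → ℕ → ℕ → Prop) (x : ℕ → Letter) (b : ℕ → ℕ) : Prop :=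
  b 0 = 0 ∧ ∀ j, Seg x (b j) (b (j + 1) - b j)

/-- The word map `g₀`: `35^k ↦ 42^{k-1}5`, `42^k5 ↦ 42^{k-1}55` (`k ≥ 1`), `45 ↦ 35`,
and `a ↦ a` for single letters.  (All these maps preserve length.) -/
def g0 (w : List Letter) : List Letter :=
  if w.length ≤ 1 then w
  else if w = [l4, l5] then [l3, l5]
  else if w.headI = l3 then l4 :: (List.replicate (w.length - 2) l2 ++ [l5])
  else l4 :: (List.replicate (w.length - 3) l2 ++ [l5, l5])

/-- `u = g(x)`: for some `E`-segment decomposition `x = X₁X₂⋯` (with starting positions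
`b`), the sequence `u` is `g₀(X₁)g₀(X₂)⋯`, each `g₀(X_j)` occupying the positions
of `X_j` (note that `g₀` preserves lengths). -/
def gRel (x u : ℕ → Letter) : Prop :=
  ∃ b : ℕ → ℕ, SegDecomp ESegment x b ∧
    ∀ j, fword u (b j) (b (j + 1) - b j) = g0 (fword x (b j) (b (j + 1) - b j))

/-- `E' = π_E(Ω)`. -/
def Eset' (E : Set ℂ) : Set ℂ := {p | ∃ x ∈ OmegaSeq, codes phiE E x p}

/-- `F' = π_F(Ω)`. -/
def Fset' (F : Set ℂ) : Set ℂ := {q | ∃ u ∈ OmegaSeq, codes phiF F u q}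

/-- The dimension `s = log 5 / log 3`. -/
def sDim : ℝ := Real.log 5 / Real.log 3

end

/-! ### Cylinders of a general integer-digit system -/

theorem iterPhi_append (φ : Letter → ℂ → ℂ) (v w : List Letter) (z : ℂ) :
    iterPhi φ (v ++ w) z = iterPhi φ v (iterPhi φ w z) := by
  induction v with
  | nil => rfl
  | cons j v ih => simp [iterPhi, ih]

theorem iterPhi_injective {φ : Letter → ℂ → ℂ} (hφ : ∀ j, Function.Injective (φ j))
    (w : List Letter) : Function.Injective (iterPhi φ w) := by
  induction w with
  | nil => exact Function.injective_id
  | cons j w ih => exact (hφ j).comp ih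

theorem preWord_succ (x : ℕ → Letter) (n : ℕ) : preWord x (n + 1) = preWord x n ++ [x n] := by
  rw [preWord, List.ofFn_succ_last]
  rfl

theorem preWord_congr {x y : ℕ → Letter} {n : ℕ} (h : ∀ i < n, x i = y i) :
    preWord x n = preWord y n := by
  unfold preWord
  congr 1
  funext i
  exact h i i.2

theorem fword_congr {x y : ℕ → Letter} {n : ℕ} (h : ∀ i < n, x i = y i) :
    fword x 0 n = fword y 0 n := by
  unfold fword
  congr 1
  funext i
  simpa using h i i.2

theorem IsAttractor.map_mem {φ : Letter → ℂ → ℂ} {K : Set ℂ} (hK : IsAttractor φ K)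
    (j : Letter) {z : ℂ} (hz : z ∈ K) : φ j z ∈ K := by
  rw [hK.2.2]
  exact Set.mem_iUnion.2 ⟨j, z, hz, rfl⟩

theorem IsAttractor.exists_preimage {φ : Letter → ℂ → ℂ} {K : Set ℂ} (hK : IsAttractor φ K)
    {z : ℂ} (hz : z ∈ K) : ∃ j, ∃ w ∈ K, φ j w = z := by
  rw [hK.2.2] at hz
  simpa using hz

/-- Cylinders along a sequence are nested. -/
theorem cylinder_antitone {φ : Letter → ℂ → ℂ} {K : Set ℂ} (hK : IsAttractor φ K)
    (x : ℕ → Letter) : Antitone fun n => iterPhi φ (preWord x n) '' K := by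
  refine antitone_nat_of_succ_le fun n => ?_
  rintro _ ⟨z, hz, rfl⟩
  refine ⟨φ (x n) z, hK.map_mem _ hz, ?_⟩
  simp [preWord_succ, iterPhi_append, iterPhi]

/-- A real function on the attractor that transforms as `f ↦ (f + c)/3` with `c ∈ [0, 2]` takes
values in `[0, 1]`: compare its extreme values on `K` with themselves. -/
theorem functional_bounds {φ : Letter → ℂ → ℂ} {K : Set ℂ} (hK : IsAttractor φ K)
    {f : ℂ → ℝ} (hf : Continuous f) {c : Letter → ℝ} (hc : ∀ j, 0 ≤ c j ∧ c j ≤ 2)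
    (hφ : ∀ j z, f (φ j z) = (f z + c j) / 3) {z : ℂ} (hz : z ∈ K) : 0 ≤ f z ∧ f z ≤ 1 := by
  obtain ⟨m, hm, hmin⟩ := hK.2.1.exists_isMinOn hK.1 hf.continuousOn
  obtain ⟨M, hM, hmax⟩ := hK.2.1.exists_isMaxOn hK.1 hf.continuousOn
  obtain ⟨j, m', hm', rfl⟩ := hK.exists_preimage hm
  obtain ⟨k, M', hM', rfl⟩ := hK.exists_preimage hM
  have h1 := hmin hm'
  have h2 := hmax hM'
  have h3 := hmin hz
  have h4 := hmax hz
  simp only [Set.mem_ofPred_eq, hφ] at h1 h2 h3 h4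
  have := hc j
  have := hc k
  constructor <;> linarith

/-- The digits `a j + b j * i` are Gaussian integers with coordinates in `{0, 1, 2}`, and `φ` is
the corresponding system of maps `z ↦ (z + a j + b j * i) / 3`. -/
structure IntDigits (φ : Letter → ℂ → ℂ) (a b : Letter → ℤ) : Prop where
  map_eq : ∀ j z, φ j z = (z + ((a j : ℂ) + (b j : ℂ) * Complex.I)) / 3
  a_mem : ∀ j, 0 ≤ a j ∧ a j ≤ 2
  b_mem : ∀ j, 0 ≤ b j ∧ b j ≤ 2

namespace IntDigits

variable {φ : Letter → ℂ → ℂ} {a b : Letter → ℤ}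

theorem re_map (h : IntDigits φ a b) (j : Letter) (z : ℂ) : (φ j z).re = (z.re + a j) / 3 := by
  rw [h.map_eq, show (3 : ℂ) = ((3 : ℝ) : ℂ) by norm_num, Complex.div_ofReal_re]
  simp

theorem im_map (h : IntDigits φ a b) (j : Letter) (z : ℂ) : (φ j z).im = (z.im + b j) / 3 := by
  rw [h.map_eq, show (3 : ℂ) = ((3 : ℝ) : ℂ) by norm_num, Complex.div_ofReal_im]
  simp

theorem injective (h : IntDigits φ a b) (j : Letter) : Function.Injective (φ j) := by
  intro z w hzw
  rw [h.map_eq, h.map_eq] at hzw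
  simpa using hzw

theorem attractor_bounds (h : IntDigits φ a b) {K : Set ℂ} (hK : IsAttractor φ K) {z : ℂ}
    (hz : z ∈ K) : (0 ≤ z.re ∧ z.re ≤ 1) ∧ 0 ≤ z.im ∧ z.im ≤ 1 := by
  refine ⟨functional_bounds hK Complex.continuous_re (c := fun j => (a j : ℝ)) (fun j => ?_)
    h.re_map hz, functional_bounds hK Complex.continuous_im (c := fun j => (b j : ℝ)) (fun j => ?_)
    h.im_map hz⟩
  · exact_mod_cast h.a_mem j
  · exact_mod_cast h.b_mem j

end IntDigits

/-- The offset `(m, n)` allows two translates of the unit square by Gaussian integers to meet. -/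
def Near (m n : ℤ) : Prop := (-1 ≤ m ∧ m ≤ 1) ∧ -1 ≤ n ∧ n ≤ 1

instance (m n : ℤ) : Decidable (Near m n) := by unfold Near; infer_instance

theorem IntDigits.near_of_sub {φ : Letter → ℂ → ℂ} {a b : Letter → ℤ} (h : IntDigits φ a b)
    {K : Set ℂ} (hK : IsAttractor φ K) {s t : ℂ} (hs : s ∈ K) (ht : t ∈ K) {m n : ℤ}
    (hm : s.re - t.re = m) (hn : s.im - t.im = n) : Near m n := by
  obtain ⟨⟨h1, h2⟩, h3, h4⟩ := h.attractor_bounds hK hs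
  obtain ⟨⟨h5, h6⟩, h7, h8⟩ := h.attractor_bounds hK ht
  have e1 : (-1 : ℝ) ≤ m := by linarith
  have e2 : (m : ℝ) ≤ 1 := by linarith
  have e3 : (-1 : ℝ) ≤ n := by linarith
  have e4 : (n : ℝ) ≤ 1 := by linarith
  exact ⟨⟨by exact_mod_cast e1, by exact_mod_cast e2⟩, by exact_mod_cast e3, by exact_mod_cast e4⟩

/-- If the cylinders of level `p + 2` of two sequences with common prefix of length `p` meet, then
the offsets of the levels `p + 1`, `p + 2` and, for suitable next letters `c` and `e`, `p + 3`
are all near. -/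
theorem IntDigits.meet_offsets {φ : Letter → ℂ → ℂ} {a b : Letter → ℤ} (h : IntDigits φ a b)
    {K : Set ℂ} (hK : IsAttractor φ K) {x y : ℕ → Letter} {p : ℕ} (hp : ∀ i < p, x i = y i)
    (hmeet : (iterPhi φ (preWord x (p + 2)) '' K ∩ iterPhi φ (preWord y (p + 2)) '' K).Nonempty) :
    Near (a (y p) - a (x p)) (b (y p) - b (x p)) ∧
    Near (3 * (a (y p) - a (x p)) + (a (y (p + 1)) - a (x (p + 1))))
      (3 * (b (y p) - b (x p)) + (b (y (p + 1)) - b (x (p + 1)))) ∧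
    ∃ c e : Letter,
      Near (3 * (3 * (a (y p) - a (x p)) + (a (y (p + 1)) - a (x (p + 1)))) + (a e - a c))
        (3 * (3 * (b (y p) - b (x p)) + (b (y (p + 1)) - b (x (p + 1)))) + (b e - b c)) := by
  obtain ⟨z, ⟨s, hs, hsz⟩, t, ht, htz⟩ := hmeet
  have heq : φ (x p) (φ (x (p + 1)) s) = φ (y p) (φ (y (p + 1)) t) := by
    refine iterPhi_injective h.injective (preWord x p) ?_
    rw [← htz] at hsz
    simpa [preWord_succ, iterPhi_append, iterPhi, preWord_congr hp] using hsz
  have hs1 := hK.map_mem (x (p + 1)) hs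
  have ht1 := hK.map_mem (y (p + 1)) ht
  obtain ⟨c, s', hs', hcs⟩ := hK.exists_preimage hs
  obtain ⟨e, t', ht', het⟩ := hK.exists_preimage ht
  have hre := congrArg Complex.re heq
  have him := congrArg Complex.im heq
  have hsre := congrArg Complex.re hcs
  have hsim := congrArg Complex.im hcs
  have htre := congrArg Complex.re het
  have htim := congrArg Complex.im het
  simp only [h.re_map] at hre hsre htre
  simp only [h.im_map] at him hsim htim
  refine ⟨h.near_of_sub hK hs1 ht1 ?_ ?_, h.near_of_sub hK hs ht ?_ ?_, c, e,
    h.near_of_sub hK hs' ht' ?_ ?_⟩ <;> (try simp only [h.re_map, h.im_map]) <;> push_cast <;> linarith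

/-! ### Cylinders that meet just after a mismatch -/

/-- A necessary condition for the cylinders of level two with words `c c'` and `e e'`, where
`c ≠ e`, to meet; it is common to both systems. -/
def Touching (c c' e e' : Letter) : Prop :=
  c ≠ l5 ∧ e ≠ l5 ∧ (c = l2 → c' ≠ l2 ∧ c' ≠ l5) ∧ (e = l2 → e' ≠ l2 ∧ e' ≠ l5)

instance (c c' e e' : Letter) : Decidable (Touching c c' e e') := by
  unfold Touching; infer_instance

theorem Touching.symm {c c' e e' : Letter} (h : Touching c c' e e') : Touching e e' c c' :=
  ⟨h.2.1, h.1, h.2.2.2, h.2.2.1⟩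

theorem intDigits_E : IntDigits phiE ![0, 1, 2, 2, 1] ![0, 0, 0, 1, 2] where
  map_eq j z := by fin_cases j <;> simp [phiE, dE]
  a_mem := by decide
  b_mem := by decide

theorem intDigits_F : IntDigits phiF ![1, 1, 1, 0, 2] ![2, 1, 0, 0, 1] where
  map_eq j z := by fin_cases j <;> simp [phiF, dF]
  a_mem := by decide
  b_mem := by decide

set_option maxRecDepth 100000 in
/-- The finite search: offsets that stay near for three levels occur only at touching words. -/
theorem offsets_E (a b : Letter → ℤ) (ha : a = ![0, 1, 2, 2, 1]) (hb : b = ![0, 0, 0, 1, 2]) :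
    ∀ x y : Letter, x ≠ y → Near (a y - a x) (b y - b x) →
      ∀ x' y' : Letter, Near (3 * (a y - a x) + (a y' - a x')) (3 * (b y - b x) + (b y' - b x')) →
      ∀ c e : Letter, Near (3 * (3 * (a y - a x) + (a y' - a x')) + (a e - a c))
        (3 * (3 * (b y - b x) + (b y' - b x')) + (b e - b c)) → Touching x x' y y' := by
  subst ha hb
  decide +kernel

set_option maxRecDepth 100000 in
/-- The finite search for the second system. -/
theorem offsets_F (a b : Letter → ℤ) (ha : a = ![1, 1, 1, 0, 2]) (hb : b = ![2, 1, 0, 0, 1]) :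
    ∀ x y : Letter, x ≠ y → Near (a y - a x) (b y - b x) →
      ∀ x' y' : Letter, Near (3 * (a y - a x) + (a y' - a x')) (3 * (b y - b x) + (b y' - b x')) →
      ∀ c e : Letter, Near (3 * (3 * (a y - a x) + (a y' - a x')) + (a e - a c))
        (3 * (3 * (b y - b x) + (b y' - b x')) + (b e - b c)) → Touching x x' y y' := by
  subst ha hb
  decide +kernel

theorem touching_E {E : Set ℂ} (hE : IsAttractor phiE E) {x y : ℕ → Letter} {p : ℕ}
    (hp : ∀ i < p, x i = y i) (hne : x p ≠ y p)
    (hmeet : (iterPhi phiE (preWord x (p + 2)) '' E ∩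
      iterPhi phiE (preWord y (p + 2)) '' E).Nonempty) :
    Touching (x p) (x (p + 1)) (y p) (y (p + 1)) := by
  obtain ⟨h1, h2, c, e, h3⟩ := intDigits_E.meet_offsets hE hp hmeet
  exact offsets_E _ _ rfl rfl _ _ hne h1 _ _ h2 _ _ h3

theorem touching_F {F : Set ℂ} (hF : IsAttractor phiF F) {x y : ℕ → Letter} {p : ℕ}
    (hp : ∀ i < p, x i = y i) (hne : x p ≠ y p)
    (hmeet : (iterPhi phiF (preWord x (p + 2)) '' F ∩
      iterPhi phiF (preWord y (p + 2)) '' F).Nonempty) :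
    Touching (x p) (x (p + 1)) (y p) (y (p + 1)) := by
  obtain ⟨h1, h2, c, e, h3⟩ := intDigits_F.meet_offsets hF hp hmeet
  exact offsets_F _ _ rfl rfl _ _ hne h1 _ _ h2 _ _ h3

/-- The conclusion about points and separation numbers, once the cylinders of level `p + 2` are
known not to meet. -/
theorem conclusion_of_not_meet {φ : Letter → ℂ → ℂ} {K : Set ℂ} (hK : IsAttractor φ K)
    {x y : ℕ → Letter} {p : ℕ} (hp : ∀ i < p, x i = y i)
    (hsep : ¬ (iterPhi φ (preWord x (p + 2)) '' K ∩ iterPhi φ (preWord y (p + 2)) '' K).Nonempty)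
    {pt qt : ℂ} (hpt : codes φ K x pt) (hqt : codes φ K y qt) :
    pt ≠ qt ∧ ∀ n, SepNum φ K x y n → n = p ∨ n = p + 1 := by
  refine ⟨?_, fun n hn => ?_⟩
  · rintro rfl
    exact hsep ⟨pt, hpt _, hqt _⟩
  · have hlow : p ≤ n := by
      by_contra hlt
      have hempty := hn.2 p (by omega)
      rw [preWord_congr hp, Set.inter_self] at hempty
      exact (hK.1.image _).ne_empty hempty
    have hup : n < p + 2 := by
      by_contra hge
      obtain ⟨z, hzx, hzy⟩ := hn.1
      exact hsep ⟨z, cylinder_antitone hK x (not_lt.1 hge) hzx,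
        cylinder_antitone hK y (not_lt.1 hge) hzy⟩
    omega

/-! ### First segments -/

theorem ESpecial.length_unique {x : ℕ → Letter} {L M : ℕ} (hL : ESpecial x 0 L)
    (hM : ESpecial x 0 M) : L = M := by
  have key : ∀ {L M : ℕ}, ESpecial x 0 L → ESpecial x 0 M → ¬ L < M := by
    intro L M hL hM hlt
    simp only [ESpecial, Nat.zero_add] at hL hM
    rcases hL with ⟨hL2, h0, h1, h2⟩ | ⟨hL2, h0, h1, h2⟩ <;>
      rcases hM with ⟨hM2, k0, k1, k2⟩ | ⟨hM2, k0, k1, k2⟩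
    · exact h2 (k1 L (by omega) hlt)
    · exact absurd (h0.symm.trans k0) (by decide)
    · exact absurd (h0.symm.trans k0) (by decide)
    · exact absurd (h2.symm.trans (k1 (L - 1) (by omega) (by omega))) (by decide)
  have h1 := key hL hM
  have h2 := key hM hL
  omega

theorem FSpecial.length_unique {x : ℕ → Letter} {L M : ℕ} (hL : FSpecial x 0 L)
    (hM : FSpecial x 0 M) : L = M := by
  have key : ∀ {L M : ℕ}, FSpecial x 0 L → FSpecial x 0 M → ¬ L < M := by
    intro L M hL hM hlt
    simp only [FSpecial, Nat.zero_add] at hL hM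
    rcases hL with ⟨hL2, h0, h1, h2, h3⟩ | ⟨hL2, h0, h1, h2, h3⟩ | ⟨hL2, h0, h1⟩ <;>
      rcases hM with ⟨hM2, k0, k1, k2, k3⟩ | ⟨hM2, k0, k1, k2, k3⟩ | ⟨hM2, k0, k1⟩
    · exact absurd (h2.symm.trans (k1 (L - 1) (by omega) (by omega))) (by decide)
    · rcases Nat.lt_or_ge (L + 1) M with hlt' | hge
      · exact absurd (h2.symm.trans (k1 (L - 1) (by omega) (by omega))) (by decide)
      · obtain rfl : M = L + 1 := by omega
        exact h3 k3
    · omega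
    · exact absurd (h2.symm.trans (k1 (L - 2) (by omega) (by omega))) (by decide)
    · exact absurd (h2.symm.trans (k1 (L - 2) (by omega) (by omega))) (by decide)
    · omega
    · exact absurd (h0.symm.trans k0) (by decide)
    · exact absurd (h0.symm.trans k0) (by decide)
    · omega
  have h1 := key hL hM
  have h2 := key hM hL
  omega

/-- A special segment starting at position `0` is the only segment starting there. -/
theorem ESegment.length_eq {x : ℕ → Letter} {L M : ℕ} (hM : ESegment x 0 M)
    (hL : ESpecial x 0 L) : L = M := by
  rcases hM with hM | ⟨-, hM⟩
  · exact hL.length_unique hM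
  · have hpos : 0 < L := by rcases hL with hL | hL <;> have := hL.1 <;> omega
    exact absurd ⟨le_rfl, by omega⟩ (hM 0 L hL)

/-- A special segment starting at position `0` is the only segment starting there. -/
theorem FSegment.length_eq {x : ℕ → Letter} {L M : ℕ} (hM : FSegment x 0 M)
    (hL : FSpecial x 0 L) : L = M := by
  rcases hM with hM | ⟨-, hM⟩
  · exact hL.length_unique hM
  · have hpos : 0 < L := by rcases hL with hL | hL | hL <;> have := hL.1 <;> omega
    exact absurd ⟨le_rfl, by omega⟩ (hM 0 L hL)

/-- If the words at the mismatch of `x` and `y` touch, a special segment at the start of `x` ends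
before the mismatch, and `y` inherits it together with the condition on the letter after it. -/
theorem ESpecial.transfer {x y : ℕ → Letter} {L p : ℕ} (hL : ESpecial x 0 L) (h0 : x 0 = y 0)
    (hp : ∀ i < p, x i = y i) (hne : x p ≠ y p)
    (ht : Touching (x p) (x (p + 1)) (y p) (y (p + 1))) : L ≤ p ∧ ESpecial y 0 L := by
  have hp0 : p ≠ 0 := by rintro rfl; exact hne h0
  obtain ⟨t1, t2, t3, -⟩ := ht
  simp only [ESpecial, Nat.zero_add] at hL ⊢
  rcases hL with ⟨hL2, h0, h1, h2⟩ | ⟨hL2, h0, h1, h2⟩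
  · have hLp : L ≤ p := by
      by_contra hlt
      exact t1 (h1 p (by omega) (by omega))
    refine ⟨hLp, Or.inl ⟨hL2, ?_, fun i hi hi' => ?_, ?_⟩⟩
    · rw [← hp 0 (by omega), h0]
    · rw [← hp i (by omega), h1 i hi hi']
    · rcases hLp.eq_or_lt with rfl | hlt
      · exact t2
      · rwa [← hp L hlt]
  · have hLp : L ≤ p := by
      by_contra hlt
      rcases (show p = L - 1 ∨ p < L - 1 by omega) with rfl | hlt'
      · exact t1 h2
      · have h3 := t3 (h1 p (by omega) hlt')
        rcases (show p + 1 = L - 1 ∨ p + 1 < L - 1 by omega) with he | hlt''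
        · exact h3.2 (he ▸ h2)
        · exact h3.1 (h1 (p + 1) (by omega) hlt'')
    refine ⟨hLp, Or.inr ⟨hL2, ?_, fun i hi hi' => ?_, ?_⟩⟩
    · rw [← hp 0 (by omega), h0]
    · rw [← hp i (by omega), h1 i hi hi']
    · rw [← hp (L - 1) (by omega), h2]

/-- If the words at the mismatch of `x` and `y` touch, a special segment at the start of `x` ends
before the mismatch, and `y` inherits it together with the condition on the letter after it. -/
theorem FSpecial.transfer {x y : ℕ → Letter} {L p : ℕ} (hL : FSpecial x 0 L) (h0 : x 0 = y 0)
    (hp : ∀ i < p, x i = y i) (hne : x p ≠ y p)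
    (ht : Touching (x p) (x (p + 1)) (y p) (y (p + 1))) : L ≤ p ∧ FSpecial y 0 L := by
  have hp0 : p ≠ 0 := by rintro rfl; exact hne h0
  obtain ⟨t1, t2, t3, -⟩ := ht
  -- A mismatch inside a block `42^m5` is at the letter `5` or at a `2` followed by `2` or `5`.
  have block : ∀ m : ℕ, (∀ i, 1 ≤ i → i < m → x i = l2) → x m = l5 → m < p := by
    intro m h1 h2
    by_contra hlt
    rcases (show p = m ∨ p < m by omega) with rfl | hlt'
    · exact t1 h2
    · have h3 := t3 (h1 p (by omega) hlt')
      rcases (show p + 1 = m ∨ p + 1 < m by omega) with he | hlt''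
      · exact h3.2 (he ▸ h2)
      · exact h3.1 (h1 (p + 1) (by omega) hlt'')
  simp only [FSpecial, Nat.zero_add] at hL ⊢
  rcases hL with ⟨hL2, h0, h1, h2, h3⟩ | ⟨hL2, h0, h1, h2, h3⟩ | ⟨rfl, h0, h1⟩
  · have hLp : L ≤ p := by have := block _ h1 h2; omega
    refine ⟨hLp, Or.inl ⟨hL2, ?_, fun i hi hi' => ?_, ?_, ?_⟩⟩
    · rw [← hp 0 (by omega), h0]
    · rw [← hp i (by omega), h1 i hi hi']
    · rw [← hp (L - 1) (by omega), h2]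
    · rcases hLp.eq_or_lt with rfl | hlt
      · exact t2
      · rwa [← hp L hlt]
  · have hLp : L ≤ p := by
      have := block _ h1 h2
      have : p ≠ L - 1 := by rintro rfl; exact t1 h3
      omega
    refine ⟨hLp, Or.inr (Or.inl ⟨hL2, ?_, fun i hi hi' => ?_, ?_, ?_⟩)⟩
    · rw [← hp 0 (by omega), h0]
    · rw [← hp i (by omega), h1 i hi hi']
    · rw [← hp (L - 2) (by omega), h2]
    · rw [← hp (L - 1) (by omega), h3]
  · have : p ≠ 1 := by rintro rfl; exact t1 h1
    refine ⟨by omega, Or.inr (Or.inr ⟨rfl, ?_, ?_⟩)⟩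
    · rw [← hp 0 (by omega), h0]
    · rw [← hp 1 (by omega), h1]

theorem not_touching_E {x y : ℕ → Letter} (h0 : x 0 = y 0) {L M : ℕ} (hL : ESegment x 0 L)
    (hM : ESegment y 0 M) (hLM : fword x 0 L ≠ fword y 0 M) {p : ℕ} (hp : ∀ i < p, x i = y i)
    (hne : x p ≠ y p) : ¬ Touching (x p) (x (p + 1)) (y p) (y (p + 1)) := by
  intro ht
  have hp' : ∀ i < p, y i = x i := fun i hi => (hp i hi).symm
  rcases hL with hLs | ⟨rfl, hLp⟩
  · obtain ⟨hle, hy⟩ := hLs.transfer h0 hp hne ht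
    obtain rfl := hM.length_eq hy
    exact hLM (fword_congr fun i hi => hp i (by omega))
  · rcases hM with hMs | ⟨rfl, -⟩
    · obtain ⟨hle, hx⟩ := hMs.transfer h0.symm hp' hne.symm ht.symm
      obtain rfl := ESegment.length_eq (Or.inr ⟨rfl, hLp⟩) hx
      exact hLM (fword_congr fun i hi => hp i (by omega))
    · refine hLM (fword_congr fun i hi => ?_)
      obtain rfl : i = 0 := by omega
      exact h0

theorem not_touching_F {x y : ℕ → Letter} (h0 : x 0 = y 0) {L M : ℕ} (hL : FSegment x 0 L)
    (hM : FSegment y 0 M) (hLM : fword x 0 L ≠ fword y 0 M) {p : ℕ} (hp : ∀ i < p, x i = y i)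
    (hne : x p ≠ y p) : ¬ Touching (x p) (x (p + 1)) (y p) (y (p + 1)) := by
  intro ht
  have hp' : ∀ i < p, y i = x i := fun i hi => (hp i hi).symm
  rcases hL with hLs | ⟨rfl, hLp⟩
  · obtain ⟨hle, hy⟩ := hLs.transfer h0 hp hne ht
    obtain rfl := hM.length_eq hy
    exact hLM (fword_congr fun i hi => hp i (by omega))
  · rcases hM with hMs | ⟨rfl, -⟩
    · obtain ⟨hle, hx⟩ := hMs.transfer h0.symm hp' hne.symm ht.symm
      obtain rfl := FSegment.length_eq (Or.inr ⟨rfl, hLp⟩) hx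
      exact hLM (fword_congr fun i hi => hp i (by omega))
    · refine hLM (fword_congr fun i hi => ?_)
      obtain rfl : i = 0 := by omega
      exact h0

/-- If `x, y ∈ Ω` have the same first letter but distinct first
`E`-segments, then `π_E(x) ≠ π_E(y)` and `Λ_E(x,y) ∈ {p, p+1}`, where `p` is the length
of the longest common prefix of `x` and `y`.  Similarly, if `u, v ∈ Ω` have the same
first letter but distinct first `F`-segments, then `π_F(u) ≠ π_F(v)` and
`Λ_F(u,v) ∈ {q, q+1}`, where `q` is the length of the longest common prefix. -/
theorem stmt14 (E F : Set ℂ) (hE : IsAttractor phiE E) (hF : IsAttractor phiF F) :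
    (∀ x y : ℕ → Letter, x ∈ OmegaSeq → y ∈ OmegaSeq → x 0 = y 0 →
      ∀ L M : ℕ, ESegment x 0 L → ESegment y 0 M → fword x 0 L ≠ fword y 0 M →
      ∀ p : ℕ, (∀ i < p, x i = y i) → x p ≠ y p →
      ∀ pt qt : ℂ, codes phiE E x pt → codes phiE E y qt →
        pt ≠ qt ∧ ∀ n, SepNum phiE E x y n → n = p ∨ n = p + 1) ∧
    (∀ u v : ℕ → Letter, u ∈ OmegaSeq → v ∈ OmegaSeq → u 0 = v 0 →
      ∀ L M : ℕ, FSegment u 0 L → FSegment v 0 M → fword u 0 L ≠ fword v 0 M →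
      ∀ q : ℕ, (∀ i < q, u i = v i) → u q ≠ v q →
      ∀ pt qt : ℂ, codes phiF F u pt → codes phiF F v qt →
        pt ≠ qt ∧ ∀ n, SepNum phiF F u v n → n = q ∨ n = q + 1) := by
  refine ⟨?_, ?_⟩
  · intro x y _ _ h0 L M hL hM hLM p hp hne pt qt hpt hqt
    exact conclusion_of_not_meet hE hp
      (fun hmeet => not_touching_E h0 hL hM hLM hp hne (touching_E hE hp hne hmeet)) hpt hqt
  · intro x y _ _ h0 L M hL hM hLM p hp hne pt qt hpt hqt
    exact conclusion_of_not_meet hF hp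
      (fun hmeet => not_touching_F h0 hL hM hLM hp hne (touching_F hF hp hne hmeet)) hpt hqt
end

section
/- Let x, y ∈ Ω with (x₁, y₁) ∈ {(1,2),(2,1),(2,3),(3,2)}. Then π_E(x) ≠ π_E(y), π_F(g(x)) ≠ π_F(g(y)), and setting n = Λ_E(x,y) one has n ≥ 1 and n − 1 ≤ Λ_F(g(x),g(y)) ≤ n + 1. -/
/-!
Both attractors lie in the unit square, so two level-`n` cells can only meet when their integer
offset `D` lies in `K - K` with coordinates in `{-1, 0, 1}`. Writing `z = φ_a(z')`, `w = φ_b(w')`,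
an offset `D = z - w` is replaced by `3D + d_b - d_a` one level down, which makes intersection of
cells a finite automaton on offsets (`Meets_succ`).

For `E` the offset `1` only survives through the letter pair `(3,1)`; for `F` the offset `-i` only
survives through the same pair `(3,1)` (all other continuations leave the unit square or reach the
diagonal offsets, which are dead). Since the first letters `(1,2)` and `(2,3)` produce offset `1` for
`E` and `-i` for `F`, both separation numbers equal one plus the minimum of the initial run of `3`s
in one tail and of the initial run of `1`s in the other (`Meets_E_iff`, `Meets_F_iff`).

It remains to see that `g` preserves the occurrences of `1` and changes the length of a run of `3`s
by at most one: a `3` can be lost only when followed by a `5`, and created only (from `45`) with a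
`5` after it (`gRel_local`). If the first letter `3` itself is turned into `4`, the next letter is
`5`, and the separation numbers are `1` for `E` and `0` for `F`. Finiteness comes from the tails
`4^∞`, which contain no `1`.
-/

open MeasureTheory

/-! ### Intersections of cells as an automaton on offsets -/

/-- The similarity `z ↦ (z + d_j)/3` for an arbitrary digit set `d`. -/
noncomputable def phiD (d : Letter → ℂ) (j : Letter) (z : ℂ) : ℂ := (z + d j) / 3

/-- The difference set `K - K`. -/
def Diff (K : Set ℂ) (D : ℂ) : Prop := ∃ z ∈ K, ∃ w ∈ K, z - w = D

/-- The cell of `x` of level `n` meets the cell of `y` of level `n` translated by `D`. -/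
def Meets (d : Letter → ℂ) (K : Set ℂ) (D : ℂ) (x y : ℕ → Letter) (n : ℕ) : Prop :=
  ∃ z ∈ K, ∃ w ∈ K,
    iterPhi (phiD d) (preWord x n) z - iterPhi (phiD d) (preWord y n) w = D

lemma inter_nonempty_iff (d : Letter → ℂ) (K : Set ℂ) (x y : ℕ → Letter) (n : ℕ) :
    (iterPhi (phiD d) (preWord x n) '' K ∩ iterPhi (phiD d) (preWord y n) '' K).Nonempty ↔
      Meets d K 0 x y n := by
  constructor
  · rintro ⟨t, ⟨z, hz, rfl⟩, ⟨w, hw, h⟩⟩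
    exact ⟨z, hz, w, hw, by rw [h, sub_self]⟩
  · rintro ⟨z, hz, w, hw, h⟩
    exact ⟨_, ⟨z, hz, rfl⟩, ⟨w, hw, (sub_eq_zero.1 h).symm⟩⟩

lemma Meets_zero (d : Letter → ℂ) (K : Set ℂ) (D : ℂ) (x y : ℕ → Letter) :
    Meets d K D x y 0 ↔ Diff K D := by
  simp [Meets, Diff, preWord, iterPhi]

lemma iterPhi_preWord_succ (φ : Letter → ℂ → ℂ) (x : ℕ → Letter) (n : ℕ) (z : ℂ) :
    iterPhi φ (preWord x (n + 1)) z = φ (x 0) (iterPhi φ (preWord (fun i => x (i + 1)) n) z) := by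
  simp [preWord, List.ofFn_succ, iterPhi]

/-- Passing to the first-level subcells turns the offset `D` into `3D + d_{y₁} - d_{x₁}`. -/
lemma Meets_succ (d : Letter → ℂ) (K : Set ℂ) (D : ℂ) (x y : ℕ → Letter) (n : ℕ) :
    Meets d K D x y (n + 1) ↔
      Meets d K (3 * D + d (y 0) - d (x 0)) (fun i => x (i + 1)) (fun i => y (i + 1)) n := by
  unfold Meets
  simp only [iterPhi_preWord_succ, phiD]
  constructor
  · rintro ⟨z, hz, w, hw, h⟩
    exact ⟨z, hz, w, hw, by rw [← h]; ring⟩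
  · rintro ⟨z, hz, w, hw, h⟩
    refine ⟨z, hz, w, hw, ?_⟩
    linear_combination (1 / 3 : ℂ) * h

lemma mem_phiD {d : Letter → ℂ} {K : Set ℂ} (hK : IsAttractor (phiD d) K) (j : Letter) {z : ℂ}
    (hz : z ∈ K) : phiD d j z ∈ K := by
  rw [hK.2.2]
  exact Set.mem_iUnion.2 ⟨j, z, hz, rfl⟩

lemma exists_phiD {d : Letter → ℂ} {K : Set ℂ} (hK : IsAttractor (phiD d) K) {z : ℂ}
    (hz : z ∈ K) : ∃ j, ∃ w ∈ K, phiD d j w = z := by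
  rw [hK.2.2] at hz
  exact Set.mem_iUnion.1 hz

lemma iterPhi_mem {d : Letter → ℂ} {K : Set ℂ} (hK : IsAttractor (phiD d) K) (w : List Letter)
    {z : ℂ} (hz : z ∈ K) : iterPhi (phiD d) w z ∈ K := by
  induction w with
  | nil => exact hz
  | cons j w ih => exact mem_phiD hK j ih

lemma Meets.diff {d : Letter → ℂ} {K : Set ℂ} (hK : IsAttractor (phiD d) K) {D : ℂ}
    {x y : ℕ → Letter} {n : ℕ} (h : Meets d K D x y n) : Diff K D := by
  obtain ⟨z, hz, w, hw, h⟩ := h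
  exact ⟨_, iterPhi_mem hK _ hz, _, iterPhi_mem hK _ hw, h⟩

lemma Diff.step {d : Letter → ℂ} {K : Set ℂ} (hK : IsAttractor (phiD d) K) {D : ℂ}
    (h : Diff K D) : ∃ a b, Diff K (3 * D + d b - d a) := by
  obtain ⟨z, hz, w, hw, h⟩ := h
  obtain ⟨a, z', hz', rfl⟩ := exists_phiD hK hz
  obtain ⟨b, w', hw', rfl⟩ := exists_phiD hK hw
  refine ⟨a, b, z', hz', w', hw', ?_⟩
  rw [← h]
  simp only [phiD]
  ring

/-- A continuous `f` that transforms under each `φ_j` like a real-linear functional, with values in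
`[0,2]` on the digits, has values in `[0,1]` on the attractor: compare an extremal point with its preimage in a subcell. -/
lemma functional_mem_Icc {d : Letter → ℂ} {K : Set ℂ} (hK : IsAttractor (phiD d) K) (f : ℂ → ℝ)
    (hf : Continuous f) (hphi : ∀ j z, f (phiD d j z) = (f z + f (d j)) / 3)
    (hd : ∀ j, 0 ≤ f (d j) ∧ f (d j) ≤ 2) {z : ℂ} (hz : z ∈ K) : 0 ≤ f z ∧ f z ≤ 1 := by
  constructor
  · obtain ⟨m, hm, hmin⟩ := hK.2.1.exists_isMinOn hK.1 hf.continuousOn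
    obtain ⟨j, w, hw, rfl⟩ := exists_phiD hK hm
    have h1 : f (phiD d j w) ≤ f w := hmin hw
    have h2 : f (phiD d j w) ≤ f z := hmin hz
    have h3 := hphi j w
    have h4 := hd j
    linarith
  · obtain ⟨m, hm, hmax⟩ := hK.2.1.exists_isMaxOn hK.1 hf.continuousOn
    obtain ⟨j, w, hw, rfl⟩ := exists_phiD hK hm
    have h1 : f w ≤ f (phiD d j w) := hmax hw
    have h2 : f z ≤ f (phiD d j w) := hmax hz
    have h3 := hphi j w
    have h4 := hd j
    linarith

lemma Diff.bound {d : Letter → ℂ} {K : Set ℂ} (hK : IsAttractor (phiD d) K)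
    (hre : ∀ j, 0 ≤ (d j).re ∧ (d j).re ≤ 2) (him : ∀ j, 0 ≤ (d j).im ∧ (d j).im ≤ 2) {D : ℂ}
    (h : Diff K D) : (-1 ≤ D.re ∧ D.re ≤ 1) ∧ (-1 ≤ D.im ∧ D.im ≤ 1) := by
  obtain ⟨z, hz, w, hw, rfl⟩ := h
  have hr : ∀ j z, (phiD d j z).re = (z.re + (d j).re) / 3 := by intro j z; simp [phiD]
  have hi : ∀ j z, (phiD d j z).im = (z.im + (d j).im) / 3 := by intro j z; simp [phiD]
  have h1 := functional_mem_Icc hK Complex.re Complex.continuous_re hr hre hz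
  have h2 := functional_mem_Icc hK Complex.re Complex.continuous_re hr hre hw
  have h3 := functional_mem_Icc hK Complex.im Complex.continuous_im hi him hz
  have h4 := functional_mem_Icc hK Complex.im Complex.continuous_im hi him hw
  simp only [Complex.sub_re, Complex.sub_im]
  refine ⟨⟨?_, ?_⟩, ?_, ?_⟩ <;> linarith

/-- The fixed point `d_j / 2` of `φ_j` lies in the attractor, since `φ_j` would strictly decrease
a positive minimal distance to it. -/
lemma fixed_mem {d : Letter → ℂ} {K : Set ℂ} (hK : IsAttractor (phiD d) K) (j : Letter) :
    d j / 2 ∈ K := by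
  have hc : Continuous fun z : ℂ => ‖z - d j / 2‖ := by fun_prop
  obtain ⟨m, hm, hmin⟩ := hK.2.1.exists_isMinOn hK.1 hc.continuousOn
  have h1 : ‖m - d j / 2‖ ≤ ‖phiD d j m - d j / 2‖ := hmin (mem_phiD hK j hm)
  have h2 : phiD d j m - d j / 2 = (m - d j / 2) / 3 := by simp only [phiD]; ring
  rw [h2, norm_div, Complex.norm_ofNat] at h1
  have h3 : ‖m - d j / 2‖ = 0 := by
    have := norm_nonneg (m - d j / 2)
    linarith
  rw [← sub_eq_zero.1 (norm_eq_zero.1 h3)]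
  exact hm

/-! ### The surviving offsets of `E` and `F` -/

lemma dE_re (j : Letter) : (dE j).re = ![0, 1, 2, 2, 1] j := by
  fin_cases j <;> simp [dE]

lemma dE_im (j : Letter) : (dE j).im = ![0, 0, 0, 1, 2] j := by
  fin_cases j <;> simp [dE]

lemma dF_re (j : Letter) : (dF j).re = ![1, 1, 1, 0, 2] j := by
  fin_cases j <;> simp [dF]

lemma dF_im (j : Letter) : (dF j).im = ![2, 1, 0, 0, 1] j := by
  fin_cases j <;> simp [dF]

lemma Diff.bound_E {E : Set ℂ} (hE : IsAttractor (phiD dE) E) {D : ℂ} (h : Diff E D) :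
    (-1 ≤ D.re ∧ D.re ≤ 1) ∧ (-1 ≤ D.im ∧ D.im ≤ 1) := by
  refine h.bound hE (fun j => ?_) (fun j => ?_)
  · rw [dE_re]; fin_cases j <;> simp
  · rw [dE_im]; fin_cases j <;> simp

lemma Diff.bound_F {F : Set ℂ} (hF : IsAttractor (phiD dF) F) {D : ℂ} (h : Diff F D) :
    (-1 ≤ D.re ∧ D.re ≤ 1) ∧ (-1 ≤ D.im ∧ D.im ≤ 1) := by
  refine h.bound hF (fun j => ?_) (fun j => ?_)
  · rw [dF_re]; fin_cases j <;> simp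
  · rw [dF_im]; fin_cases j <;> simp

lemma not_diff_E {E : Set ℂ} (hE : IsAttractor (phiD dE) E) : ¬ Diff E (1 - Complex.I) := by
  intro h
  obtain ⟨a, b, h⟩ := h.step hE
  have hb := h.bound_E hE
  simp only [Complex.sub_re, Complex.add_re, Complex.sub_im, Complex.add_im, Complex.mul_re,
    Complex.mul_im, dE_re, dE_im] at hb
  fin_cases a <;> fin_cases b <;> norm_num at hb

lemma not_diff_F {F : Set ℂ} (hF : IsAttractor (phiD dF) F) {D : ℂ}
    (hD : D = 1 - Complex.I ∨ D = -1 - Complex.I) : ¬ Diff F D := by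
  intro h
  obtain ⟨a, b, h⟩ := h.step hF
  have hb := h.bound_F hF
  rcases hD with rfl | rfl <;>
  · simp only [Complex.sub_re, Complex.add_re, Complex.sub_im, Complex.add_im, Complex.mul_re,
      Complex.mul_im, dF_re, dF_im] at hb
    fin_cases a <;> fin_cases b <;> norm_num at hb

/-- In `E`, horizontally adjacent cells stay adjacent only through the letters `(3,1)`; the pair
`(4,1)` leads to the dead diagonal offset. -/
lemma Meets_E_step {E : Set ℂ} (hE : IsAttractor (phiD dE) E) {x y : ℕ → Letter} {n : ℕ}
    (h : Meets dE E 1 x y (n + 1)) : x 0 = l3 ∧ y 0 = l1 := by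
  have hd := ((Meets_succ _ _ _ _ _ _).1 h).diff hE
  have hb := hd.bound_E hE
  generalize x 0 = a at hd hb ⊢
  generalize y 0 = b at hd hb ⊢
  have h41 : ¬ (a = 3 ∧ b = 0) := by
    rintro ⟨rfl, rfl⟩
    refine not_diff_E hE ?_
    convert hd using 1
    simp [dE]
    ring
  simp only [Complex.sub_re, Complex.add_re, Complex.sub_im, Complex.add_im, Complex.mul_re,
    Complex.mul_im, dE_re, dE_im] at hb
  fin_cases a <;> fin_cases b <;> first
    | exact ⟨rfl, rfl⟩
    | exact absurd ⟨rfl, rfl⟩ h41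
    | (exfalso; norm_num at hb; done)

/-- In `F`, vertically adjacent cells stay adjacent only through the letters `(3,1)`; the pair
`(4,1)` leads to a dead diagonal offset. -/
lemma Meets_F_step {F : Set ℂ} (hF : IsAttractor (phiD dF) F) {x y : ℕ → Letter} {n : ℕ}
    (h : Meets dF F (-Complex.I) x y (n + 1)) : x 0 = l3 ∧ y 0 = l1 := by
  have hd := ((Meets_succ _ _ _ _ _ _).1 h).diff hF
  have hb := hd.bound_F hF
  generalize x 0 = a at hd hb ⊢
  generalize y 0 = b at hd hb ⊢
  have h41 : ¬ (a = 3 ∧ b = 0) := by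
    rintro ⟨rfl, rfl⟩
    refine not_diff_F hF (Or.inl rfl) ?_
    convert hd using 1
    simp [dF]
    ring
  simp only [Complex.sub_re, Complex.add_re, Complex.sub_im, Complex.add_im, Complex.mul_re,
    Complex.mul_im, dF_re, dF_im] at hb
  fin_cases a <;> fin_cases b <;> first
    | exact ⟨rfl, rfl⟩
    | exact absurd ⟨rfl, rfl⟩ h41
    | (exfalso; norm_num at hb; done)

lemma forall_lt_succ_iff (A : ℕ → Prop) (n : ℕ) :
    (∀ i < n + 1, A i) ↔ A 0 ∧ ∀ i < n, A (i + 1) := by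
  constructor
  · intro h
    exact ⟨h 0 (by omega), fun i hi => h (i + 1) (by omega)⟩
  · rintro ⟨h0, h⟩ (_ | i) hi
    · exact h0
    · exact h i (by omega)

lemma Meets_E_iff {E : Set ℂ} (hE : IsAttractor (phiD dE) E) (n : ℕ) (x y : ℕ → Letter) :
    Meets dE E 1 x y n ↔ ∀ i < n, x i = l3 ∧ y i = l1 := by
  induction n generalizing x y with
  | zero =>
    rw [Meets_zero]
    refine ⟨fun _ i hi => absurd hi (by omega), fun _ => ?_⟩
    exact ⟨_, fixed_mem hE l3, _, fixed_mem hE l1, by simp [dE, l3, l1]⟩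
  | succ n ih =>
    have key : x 0 = l3 → y 0 = l1 → 3 * (1 : ℂ) + dE (y 0) - dE (x 0) = 1 := by
      intro h h'
      rw [h, h']
      simp [dE, l3, l1]
      norm_num
    rw [forall_lt_succ_iff (fun i => x i = l3 ∧ y i = l1), ← ih]
    constructor
    · intro h
      have h0 := Meets_E_step hE h
      rw [Meets_succ, key h0.1 h0.2] at h
      exact ⟨h0, h⟩
    · rintro ⟨h0, h⟩
      rw [Meets_succ, key h0.1 h0.2]
      exact h

lemma Meets_F_iff {F : Set ℂ} (hF : IsAttractor (phiD dF) F) (n : ℕ) (x y : ℕ → Letter) :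
    Meets dF F (-Complex.I) x y n ↔ ∀ i < n, x i = l3 ∧ y i = l1 := by
  induction n generalizing x y with
  | zero =>
    rw [Meets_zero]
    refine ⟨fun _ i hi => absurd hi (by omega), fun _ => ?_⟩
    refine ⟨_, fixed_mem hF l3, _, fixed_mem hF l1, ?_⟩
    simp [dF, l3, l1]
    ring
  | succ n ih =>
    have key : x 0 = l3 → y 0 = l1 →
        3 * (-Complex.I) + dF (y 0) - dF (x 0) = -Complex.I := by
      intro h h'
      rw [h, h']
      simp [dF, l3, l1]
      ring
    rw [forall_lt_succ_iff (fun i => x i = l3 ∧ y i = l1), ← ih]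
    constructor
    · intro h
      have h0 := Meets_F_step hF h
      rw [Meets_succ, key h0.1 h0.2] at h
      exact ⟨h0, h⟩
    · rintro ⟨h0, h⟩
      rw [Meets_succ, key h0.1 h0.2]
      exact h

/-! ### Letterwise description of `g` -/

lemma fword_length (x : ℕ → Letter) (p L : ℕ) : (fword x p L).length = L := by
  simp [fword]

lemma fword_get (x : ℕ → Letter) (p L k : ℕ) (hk : k < L) : (fword x p L)[k]? = some (x (p + k)) := by
  simp [fword, hk]

lemma fword_head (x : ℕ → Letter) (p L : ℕ) (hL : 1 ≤ L) : (fword x p L).headI = x p := by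
  obtain ⟨L, rfl⟩ := Nat.exists_eq_add_of_le' hL
  simp [fword, List.ofFn_succ]

/-- Applied to the words `42^r5`, `42^r55` and `35` produced by `g₀`. -/
lemma entry_of_tail {u : ℕ → Letter} {p L k : ℕ} {c : Letter} {w : List Letter}
    (hw : ∀ a ∈ w, a = l2 ∨ a = l5) (h : fword u p L = c :: w) (hk : k + 1 < L) :
    u (p + (k + 1)) = l2 ∨ u (p + (k + 1)) = l5 := by
  have h1 := fword_get u p L (k + 1) hk
  rw [h, List.getElem?_cons_succ] at h1
  exact hw _ (List.mem_of_getElem? h1)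

lemma entry_zero {u : ℕ → Letter} {p L : ℕ} {c : Letter} {w : List Letter}
    (h : fword u p L = c :: w) (hL : 0 < L) : u p = c := by
  have h1 := fword_get u p L 0 hL
  rw [h] at h1
  simpa using h1.symm

/-- The possible effects of `g` on the letter at position `i`. -/
def LocalG (x u : ℕ → Letter) (i : ℕ) : Prop :=
  u i = x i ∨ (x i = l3 ∧ u i = l4 ∧ x (i + 1) = l5) ∨
    (x i = l4 ∧ u i = l3 ∧ u (i + 1) = l5) ∨
    (1 ≤ i ∧ (x i = l2 ∨ x i = l5) ∧ (u i = l2 ∨ u i = l5))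

lemma localG_of_segment {x u : ℕ → Letter} {p L : ℕ} (hs : ESegment x p L)
    (h : fword u p L = g0 (fword x p L)) {k : ℕ} (hk : k < L) : LocalG x u (p + k) := by
  have hlen := fword_length x p L
  unfold g0 at h
  rw [hlen] at h
  rcases hs with (⟨hL, h0, h5, -⟩ | ⟨hL, h0, h2, h5⟩) | ⟨rfl, -⟩
  · have hhead := fword_head x p L (by omega)
    have hne : fword x p L ≠ [l4, l5] := by
      intro hc
      rw [hc, h0] at hhead
      exact absurd hhead (by decide)
    rw [if_neg (by omega), if_neg hne, if_pos (by rw [hhead, h0])] at h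
    rcases k with _ | k
    · exact Or.inr (Or.inl ⟨h0, entry_zero h (by omega), h5 1 le_rfl (by omega)⟩)
    · refine Or.inr (Or.inr (Or.inr ⟨by omega, Or.inr (h5 _ (by omega) hk), ?_⟩))
      refine entry_of_tail ?_ h hk
      intro a ha
      simp only [List.mem_append, List.mem_replicate, List.mem_singleton] at ha
      tauto
  · have hhead := fword_head x p L (by omega)
    have hx : ∀ k, k + 1 < L → x (p + (k + 1)) = l2 ∨ x (p + (k + 1)) = l5 := by
      intro k hk
      by_cases hk' : k + 1 < L - 1
      · exact Or.inl (h2 _ (by omega) hk')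
      · right
        rw [← h5]
        congr 1
        omega
    rw [if_neg (by omega)] at h
    by_cases hw : fword x p L = [l4, l5]
    · rw [if_pos hw] at h
      rcases k with _ | k
      · refine Or.inr (Or.inr (Or.inl ⟨h0, entry_zero h (by omega), ?_⟩))
        have h1 := fword_get u p L 1 (by omega)
        rw [h] at h1
        simpa using h1.symm
      · refine Or.inr (Or.inr (Or.inr ⟨by omega, hx k hk, ?_⟩))
        exact entry_of_tail (by simp) h hk
    · rw [if_neg hw, if_neg (by rw [hhead, h0]; decide)] at h
      rcases k with _ | k
      · exact Or.inl ((entry_zero h (by omega)).trans h0.symm)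
      · refine Or.inr (Or.inr (Or.inr ⟨by omega, hx k hk, ?_⟩))
        refine entry_of_tail ?_ h hk
        intro a ha
        simp only [List.mem_append, List.mem_replicate, List.mem_cons, List.not_mem_nil] at ha
        tauto
  · rw [if_pos le_rfl] at h
    have h1 := fword_get u p 1 k hk
    rw [h, fword_get x p 1 k hk] at h1
    exact Or.inl (Option.some.inj h1).symm

lemma gRel_local {x u : ℕ → Letter} (h : gRel x u) (i : ℕ) : LocalG x u i := by
  obtain ⟨b, ⟨hb0, hseg⟩, hg⟩ := h
  have hpos : ∀ j, b j < b (j + 1) := by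
    intro j
    rcases hseg j with (h | h) | h <;> have := h.1 <;> omega
  have hcover : ∀ j, i < b j → ∃ j', b j' ≤ i ∧ i < b (j' + 1) := by
    intro j
    induction j with
    | zero => intro h; omega
    | succ j ih =>
      intro h
      by_cases hj : i < b j
      · exact ih hj
      · exact ⟨j, by omega, h⟩
  have hmono : StrictMono b := strictMono_nat_of_lt_succ hpos
  obtain ⟨j, hj1, hj2⟩ := hcover (i + 1) (hmono.le_apply (x := i + 1))
  obtain ⟨k, rfl⟩ := Nat.exists_eq_add_of_le hj1
  exact localG_of_segment (hseg j) (hg j) (by omega)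

lemma letters_ne : l1 ≠ l2 ∧ l1 ≠ l3 ∧ l1 ≠ l4 ∧ l1 ≠ l5 ∧ l2 ≠ l3 ∧ l2 ≠ l4 ∧ l2 ≠ l5 ∧
    l3 ≠ l4 ∧ l3 ≠ l5 ∧ l4 ≠ l5 := by decide

lemma gRel_one_iff {x u : ℕ → Letter} (h : gRel x u) (i : ℕ) : u i = l1 ↔ x i = l1 := by
  have := gRel_local h i
  have := letters_ne
  unfold LocalG at *
  grind

/-- A letter `3` is only changed when followed by `5`. -/
lemma gRel_three {x u : ℕ → Letter} (h : gRel x u) (i : ℕ) (hx : x i = l3)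
    (hx' : x (i + 1) ≠ l5) : u i = l3 := by
  have := gRel_local h i
  have := letters_ne
  unfold LocalG at *
  grind

/-- A new letter `3` is always followed by `5`. -/
lemma gRel_three_of {x u : ℕ → Letter} (h : gRel x u) (i : ℕ) (hu : u i = l3)
    (hu' : u (i + 1) ≠ l5) : x i = l3 := by
  have := gRel_local h i
  have := letters_ne
  unfold LocalG at *
  grind

lemma gRel_zero_two {x u : ℕ → Letter} (h : gRel x u) (hx : x 0 = l2) : u 0 = l2 := by
  have := gRel_local h 0
  have := letters_ne
  unfold LocalG at *
  grind

lemma gRel_zero_three {x u : ℕ → Letter} (h : gRel x u) (hx : x 0 = l3) :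
    u 0 = l3 ∨ (u 0 = l4 ∧ x 1 = l5) := by
  have := gRel_local h 0
  have := letters_ne
  unfold LocalG at *
  grind

/-! ### Comparison of the separation numbers -/

lemma SepNum.symm {φ : Letter → ℂ → ℂ} {K : Set ℂ} {x y : ℕ → Letter} {n : ℕ}
    (h : SepNum φ K x y n) : SepNum φ K y x n := by
  refine ⟨?_, fun m hm => ?_⟩
  · rw [Set.inter_comm]; exact h.1
  · rw [Set.inter_comm]; exact h.2 m hm

/-- If cells of level `n + 1` meet exactly as long as `A` holds below `n`, then the separation
number is one plus the first index at which `A` fails. -/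
lemma SepNum.of_run {d : Letter → ℂ} {K : Set ℂ} {x y : ℕ → Letter} {n : ℕ} {A : ℕ → Prop}
    (hA : ∀ n, Meets d K 0 x y (n + 1) ↔ ∀ i < n, A i) (h : SepNum (phiD d) K x y n) :
    1 ≤ n ∧ (∀ i, i + 1 < n → A i) ∧ ¬ A (n - 1) := by
  have hno : ∀ m, n < m → ¬ Meets d K 0 x y m := by
    intro m hm hc
    rw [← inter_nonempty_iff, h.2 m hm] at hc
    exact Set.not_nonempty_empty hc
  have hyes := (inter_nonempty_iff _ _ _ _ _).1 h.1
  have hn : 1 ≤ n := by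
    by_contra hn
    exact hno 1 (by omega) ((hA 0).2 fun i hi => absurd hi (by omega))
  obtain ⟨k, rfl⟩ := Nat.exists_eq_add_of_le' hn
  have hk := (hA k).1 hyes
  refine ⟨hn, fun i hi => hk i (by omega), fun hc => ?_⟩
  refine hno (k + 2) (by omega) ((hA (k + 1)).2 fun i hi => ?_)
  rcases Nat.lt_succ_iff_lt_or_eq.1 hi with hi | rfl
  · exact hk i hi
  · exact hc

lemma Meets_of_codes {d : Letter → ℂ} {K : Set ℂ} {x y : ℕ → Letter} {p : ℂ}
    (hp : codes (phiD d) K x p) (hq : codes (phiD d) K y p) (n : ℕ) : Meets d K 0 x y n :=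
  (inter_nonempty_iff _ _ _ _ _).1 ⟨p, hp n, hq n⟩

/-- The theorem for first letters `(1,2)` and `(2,3)`; the other two cases follow by symmetry. -/
lemma main_ordered (E F : Set ℂ) (hE : IsAttractor (phiD dE) E) (hF : IsAttractor (phiD dF) F)
    (x y : ℕ → Letter) (hy : y ∈ OmegaSeq)
    (h1 : (x 0 = l1 ∧ y 0 = l2) ∨ (x 0 = l2 ∧ y 0 = l3))
    (u v : ℕ → Letter) (hu : gRel x u) (hv : gRel y v)
    (p q p' q' : ℂ)
    (hp : codes (phiD dE) E x p) (hq : codes (phiD dE) E y q)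
    (hp' : codes (phiD dF) F u p') (hq' : codes (phiD dF) F v q') :
    p ≠ q ∧ p' ≠ q' ∧
    ∀ n : ℕ, SepNum (phiD dE) E x y n → 1 ≤ n ∧
      ∀ m : ℕ, SepNum (phiD dF) F u v m →
        (n : ℤ) - 1 ≤ (m : ℤ) ∧ (m : ℤ) ≤ (n : ℤ) + 1 := by
  obtain ⟨N, hN⟩ := hy
  have hyN : y (N + 1) ≠ l1 := by
    rw [hN _ (by omega)]
    decide
  have hA : ∀ n, Meets dE E 0 x y (n + 1) ↔ ∀ i < n, x (i + 1) = l3 ∧ y (i + 1) = l1 := by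
    intro n
    have hD : 3 * (0 : ℂ) + dE (y 0) - dE (x 0) = 1 := by
      rcases h1 with ⟨h, h'⟩ | ⟨h, h'⟩ <;> rw [h, h'] <;> simp [dE, l1, l2, l3] <;> norm_num
    rw [Meets_succ, hD, Meets_E_iff hE]
  have hpq : p ≠ q := by
    rintro rfl
    exact hyN (((hA (N + 1)).1 (Meets_of_codes hp hq _)) N (by omega)).2
  -- Either the first letters of `g(x)`, `g(y)` are again `(1,2)` or `(2,3)`, or they are `(2,4)`.
  have hcase : ((u 0 = l1 ∧ v 0 = l2) ∨ (u 0 = l2 ∧ v 0 = l3)) ∨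
      (u 0 = l2 ∧ v 0 = l4 ∧ y 1 = l5) := by
    rcases h1 with ⟨h, h'⟩ | ⟨h, h'⟩
    · exact Or.inl (Or.inl ⟨(gRel_one_iff hu 0).2 h, gRel_zero_two hv h'⟩)
    · have h3 := gRel_zero_two hu h
      rcases gRel_zero_three hv h' with h4 | h4
      · exact Or.inl (Or.inr ⟨h3, h4⟩)
      · exact Or.inr ⟨h3, h4⟩
  rcases hcase with hcase | ⟨hu0, hv0, hy1⟩
  · have hB : ∀ n, Meets dF F 0 u v (n + 1) ↔ ∀ i < n, u (i + 1) = l3 ∧ v (i + 1) = l1 := by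
      intro n
      have hD : 3 * (0 : ℂ) + dF (v 0) - dF (u 0) = -Complex.I := by
        rcases hcase with ⟨h, h'⟩ | ⟨h, h'⟩ <;> rw [h, h'] <;> simp [dF, l1, l2, l3] <;> ring
      rw [Meets_succ, hD, Meets_F_iff hF]
    refine ⟨hpq, ?_, fun n hn => ?_⟩
    · rintro rfl
      exact hyN ((gRel_one_iff hv _).1
        (((hB (N + 1)).1 (Meets_of_codes hp' hq' _)) N (by omega)).2)
    obtain ⟨hn1, hAn, hAn'⟩ := hn.of_run hA
    refine ⟨hn1, fun m hm => ?_⟩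
    obtain ⟨hm1, hBm, hBm'⟩ := hm.of_run hB
    obtain ⟨k, rfl⟩ := Nat.exists_eq_add_of_le' hn1
    obtain ⟨l, rfl⟩ := Nat.exists_eq_add_of_le' hm1
    simp only [Nat.add_sub_cancel] at hAn' hBm'
    constructor
    · by_contra hlt
      have ha := hAn l (by omega)
      have hb := hAn (l + 1) (by omega)
      refine hBm' ⟨gRel_three hu _ ha.1 ?_, (gRel_one_iff hv _).2 ha.2⟩
      rw [hb.1]
      decide
    · by_contra hlt
      have ha := hBm k (by omega)
      have hb := hBm (k + 1) (by omega)
      refine hAn' ⟨gRel_three_of hu _ ha.1 ?_, (gRel_one_iff hv _).1 ha.2⟩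
      rw [hb.1]
      decide
  · have hB : ∀ n, ¬ Meets dF F 0 u v (n + 1) := by
      intro n hc
      rw [Meets_succ, hu0, hv0] at hc
      refine not_diff_F hF (Or.inr ?_) (hc.diff hF)
      simp [dF, l2, l4]
      ring
    refine ⟨hpq, ?_, fun n hn => ?_⟩
    · rintro rfl
      exact hB 0 (Meets_of_codes hp' hq' _)
    obtain ⟨hn1, hAn, -⟩ := hn.of_run hA
    refine ⟨hn1, fun m hm => ?_⟩
    have hm0 : m = 0 := by
      rcases m with _ | m
      · rfl
      · exact absurd ((inter_nonempty_iff _ _ _ _ _).1 hm.1) (hB m)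
    have hn2 : n ≤ 1 := by
      by_contra hlt
      have h := (hAn 0 (by omega)).2
      rw [zero_add, hy1] at h
      exact absurd h (by decide)
    omega

/-- If `x, y ∈ Ω` with `(x₁,y₁) ∈ {(1,2),(2,1),(2,3),(3,2)}`, then
`π_E(x) ≠ π_E(y)`, `π_F(g(x)) ≠ π_F(g(y))`, and `n = Λ_E(x,y)` satisfies `n ≥ 1` and
`n − 1 ≤ Λ_F(g(x),g(y)) ≤ n + 1`. -/
theorem stmt17 (E F : Set ℂ) (hE : IsAttractor phiE E) (hF : IsAttractor phiF F)
    (x y : ℕ → Letter) (hx : x ∈ OmegaSeq) (hy : y ∈ OmegaSeq)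
    (h1 : (x 0, y 0) = (l1, l2) ∨ (x 0, y 0) = (l2, l1) ∨
          (x 0, y 0) = (l2, l3) ∨ (x 0, y 0) = (l3, l2))
    (u v : ℕ → Letter) (hu : gRel x u) (hv : gRel y v)
    (p q p' q' : ℂ)
    (hp : codes phiE E x p) (hq : codes phiE E y q)
    (hp' : codes phiF F u p') (hq' : codes phiF F v q') :
    p ≠ q ∧ p' ≠ q' ∧
    ∀ n : ℕ, SepNum phiE E x y n → 1 ≤ n ∧
      ∀ m : ℕ, SepNum phiF F u v m → (n : ℤ) - 1 ≤ (m : ℤ) ∧ (m : ℤ) ≤ (n : ℤ) + 1 := by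
  have hswap : ((x 0 = l1 ∧ y 0 = l2) ∨ (x 0 = l2 ∧ y 0 = l3)) ∨
      ((y 0 = l1 ∧ x 0 = l2) ∨ (y 0 = l2 ∧ x 0 = l3)) := by
    simp only [Prod.mk.injEq] at h1
    tauto
  rcases hswap with h | h
  · exact main_ordered E F hE hF x y hy h u v hu hv p q p' q' hp hq hp' hq'
  · obtain ⟨ha, hb, hc⟩ :=
      main_ordered E F hE hF y x hx h v u hv hu q p q' p' hq hp hq' hp'
    exact ⟨ha.symm, hb.symm, fun n hn => ⟨(hc n hn.symm).1, fun m hm =>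
      (hc n hn.symm).2 m hm.symm⟩⟩
end
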